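/- Fix κ ∈ (0,4), N ≥ 2, M = ⌊N/2⌋, and real numbers y₁ ≤ ⋯ ≤ y_{N-1} < v. Then ∫_{v < u₁ < ⋯ < u_M} ∏_{1≤i≤N-1,1≤j≤M} (u_j - y_i)^{-4/κ} ∏_j (u_j - v)^{(2-κ)/κ} ∏_{i<j} (u_j - u_i)^{8/κ} du ≤ (v - y_{N-1})^{(4/κ)M(M - N + 1/2)} · ∫_{0 < u₁ < ⋯ < u_M < 1} ∏_{i<j}(u_j - u_i)^{8/κ} ∏_j u_j^{(4N - 8M + 2 - κ)/κ} (1 - u_j)^{(2-κ)/κ} du, and in particular the left-hand side is finite. -/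

import Mathlib

open MeasureTheory Real Set

lemma aux_prod_pairs (n : ℕ) (g : Fin n → ℝ) :
    ∏ p ∈ Finset.univ.filter (fun p : Fin n × Fin n => p.1 < p.2), (g p.1 * g p.2)
      = ∏ j, g j ^ (n - 1) := by
  rw [Finset.prod_mul_distrib, Finset.prod_filter, Finset.prod_filter, ← Finset.univ_product_univ,
    Finset.prod_product, Finset.prod_product_right, ← Finset.prod_mul_distrib]
  refine Finset.prod_congr rfl fun i _ => ?_
  rw [← Finset.prod_mul_distrib]
  have : ∀ j : Fin n, ((if i < j then g i else 1) * (if j < i then g i else 1))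
      = if j ∈ Finset.univ.erase i then g i else 1 := by
    intro j
    rcases lt_trichotomy i j with h | h | h
    · simp [h, h.not_gt, h.ne']
    · simp [h]
    · simp [h, h.not_gt, h.ne]
  simp only [this]
  rw [Finset.prod_ite_mem, Finset.univ_inter, Finset.prod_const]
  simp

lemma aux_rev_pairs (n : ℕ) (f : Fin n → Fin n → ℝ) :
    ∏ p ∈ Finset.univ.filter (fun p : Fin n × Fin n => p.1 < p.2), f p.2.rev p.1.rev
      = ∏ p ∈ Finset.univ.filter (fun p : Fin n × Fin n => p.1 < p.2), f p.1 p.2 := by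
  refine Finset.prod_nbij' (fun p => (p.2.rev, p.1.rev)) (fun p => (p.2.rev, p.1.rev)) ?_ ?_ ?_ ?_ ?_ <;>
    simp

lemma aux_one (κ c s : ℝ) (hκ : 0 < κ) (hc : 0 < c) (hs : 0 < s) (hs1 : s < 1) (n N : ℕ)
    (hn : 1 ≤ n) (hN : 1 ≤ N) :
    c / s ^ 2 * ((c / s) ^ (-4 / κ)) ^ (N - 1) * (c * (1 - s) / s) ^ ((2 - κ) / κ)
      * ((√c / s) ^ (8 / κ)) ^ (n - 1)
    = c ^ ((4 / κ) * ((n : ℝ) - (N : ℝ) + 1 / 2)) *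
      (s ^ ((4 * (N : ℝ) - 8 * (n : ℝ) + 2 - κ) / κ) * (1 - s) ^ ((2 - κ) / κ)) := by
  have h1 : 0 < 1 - s := by linarith
  have hq : 0 < √c := Real.sqrt_pos.2 hc
  apply Real.log_injOn_pos
  · rw [Set.mem_Ioi]
    positivity
  · rw [Set.mem_Ioi]
    positivity
  have e1 : ∀ (a b : ℝ), 0 < a → 0 < b → Real.log (a * b) = Real.log a + Real.log b :=
    fun a b ha hb => Real.log_mul ha.ne' hb.ne'
  have e2 : ∀ (a b : ℝ), 0 < a → 0 < b → Real.log (a / b) = Real.log a - Real.log b :=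
    fun a b ha hb => Real.log_div ha.ne' hb.ne'
  rw [e1 _ _ (by positivity) (by positivity), e1 _ _ (by positivity) (by positivity),
    e1 _ _ (by positivity) (by positivity), e1 _ _ (by positivity) (by positivity),
    e1 _ _ (by positivity) (by positivity), Real.log_pow, Real.log_pow,
    Real.log_rpow (by positivity), Real.log_rpow (by positivity), Real.log_rpow (by positivity),
    Real.log_rpow (by positivity), Real.log_rpow (by positivity), Real.log_rpow (by positivity),
    e2 _ _ (by positivity) (by positivity), e2 _ _ (by positivity) (by positivity),
    e2 _ _ (by positivity) (by positivity), e2 _ _ (by positivity) (by positivity),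
    e1 _ _ (by positivity) (by positivity), Real.log_pow, Real.log_sqrt hc.le,
    Nat.cast_sub hn, Nat.cast_sub hN]
  field_simp
  push_cast
  ring

lemma aux_beta (a b : ℝ) (ha : 0 < a) (hb : 0 < b) :
    IntegrableOn (fun s : ℝ => s ^ (a - 1) * (1 - s) ^ (b - 1)) (Ioo 0 1) := by
  have := Complex.betaIntegral_convergent (u := a) (v := b) (by simpa) (by simpa)
  rw [intervalIntegrable_iff_integrableOn_Ioo_of_le zero_le_one] at this
  refine IntegrableOn.congr_fun (MeasureTheory.Integrable.norm this) ?_ measurableSet_Ioo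
  intro x hx
  have h1 : (0:ℝ) < 1 - x := by linarith [hx.2]
  simp only [norm_mul]
  rw [show (1 - (x:ℂ)) = ((1 - x : ℝ) : ℂ) by push_cast; rfl, Complex.norm_cpow_eq_rpow_re_of_pos hx.1, Complex.norm_cpow_eq_rpow_re_of_pos h1]
  simp

lemma aux_meas (n : ℕ) : MeasurableSet {u : Fin n → ℝ | StrictMono u} := by
  simp only [StrictMono, ofPred_forall]
  refine MeasurableSet.iInter fun i => MeasurableSet.iInter fun j => MeasurableSet.iInter fun h => ?_
  exact measurableSet_lt (measurable_pi_apply _) (measurable_pi_apply _)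

lemma aux_H (n : ℕ) (a b k : ℝ) (ha : 0 < a) (hb : 0 < b) (hk : 0 ≤ k) :
    IntegrableOn (fun u : Fin n → ℝ => 
      (∏ p ∈ Finset.univ.filter (fun p : Fin n × Fin n => p.1 < p.2), (u p.2 - u p.1) ^ k) *
            ∏ j, (u j) ^ (a - 1) * (1 - u j) ^ (b - 1))
      {u : Fin n → ℝ | (∀ j, u j ∈ Set.Ioo (0:ℝ) 1) ∧ StrictMono u} volume := by
  have h1 : IntegrableOn (fun u : Fin n → ℝ => ∏ j, (u j) ^ (a - 1) * (1 - u j) ^ (b - 1))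
      (Set.pi univ fun _ => Ioo 0 1) volume := by
    have := Integrable.fintype_prod (𝕜 := ℝ) (ι := Fin n) (E := ℝ) (μ := fun _ => (volume : Measure ℝ).restrict (Ioo 0 1))
      (f := fun _ s => s ^ (a - 1) * (1 - s) ^ (b - 1)) (fun _ => aux_beta a b ha hb)
    rw [← Measure.restrict_pi_pi] at this
    exact this
  have hB : MeasurableSet {u : Fin n → ℝ | (∀ j, u j ∈ Set.Ioo (0:ℝ) 1) ∧ StrictMono u} := by
    have h : MeasurableSet {u : Fin n → ℝ | ∀ j, u j ∈ Ioo (0:ℝ) 1} := by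
      simp only [ofPred_forall]
      exact MeasurableSet.iInter fun i => measurable_pi_apply i measurableSet_Ioo
    exact h.inter (aux_meas n)
  have h2 := h1.mono_set (t := Set.pi univ fun _ => Ioo 0 1) (s := {u : Fin n → ℝ | (∀ j, u j ∈ Set.Ioo (0:ℝ) 1) ∧ StrictMono u})
    (fun u hu j _ => hu.1 j)
  refine Integrable.mono' h2 ?_ ?_
  · apply Measurable.aestronglyMeasurable
    fun_prop
  · refine (ae_restrict_iff' hB).2 (Filter.Eventually.of_forall fun u hu => ?_)
    have hp : 0 ≤ ∏ j, (u j) ^ (a - 1) * (1 - u j) ^ (b - 1) := Finset.prod_nonneg fun j _ =>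
      mul_nonneg (rpow_nonneg (hu.1 j).1.le _) (rpow_nonneg (by linarith [(hu.1 j).2]) _)
    have hd : ∀ p ∈ Finset.univ.filter (fun p : Fin n × Fin n => p.1 < p.2), 0 ≤ u p.2 - u p.1 := by
      intro p hp
      have := hu.2 (Finset.mem_filter.1 hp).2
      linarith
    rw [Real.norm_of_nonneg (mul_nonneg (Finset.prod_nonneg fun p hp => rpow_nonneg (hd p hp) _) hp)]
    refine mul_le_of_le_one_left hp (Finset.prod_le_one (fun p hp => rpow_nonneg (hd p hp) _) fun p hp => ?_)
    exact rpow_le_one (hd p hp) (by linarith [(hu.1 p.2).2, (hu.1 p.1).1]) hk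

noncomputable def auxDer (n : ℕ) (d : Fin n → ℝ) : (Fin n → ℝ) →L[ℝ] (Fin n → ℝ) :=
  ContinuousLinearMap.pi fun j => d j.rev • ContinuousLinearMap.proj j.rev

lemma aux_det (n : ℕ) (d : Fin n → ℝ) : |(auxDer n d).det| = ∏ j, |d j| := by
  have : ((auxDer n d : (Fin n → ℝ) →L[ℝ] (Fin n → ℝ)) : (Fin n → ℝ) →ₗ[ℝ] (Fin n → ℝ)) =
      Matrix.toLin' ((Matrix.diagonal d).submatrix (Fin.revPerm : Equiv.Perm (Fin n)) id) := by
    apply LinearMap.ext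
    intro x
    ext j
    simp [auxDer, Matrix.mulVec, dotProduct, Matrix.diagonal_apply]
  rw [ContinuousLinearMap.det, this, LinearMap.det_toLin', Matrix.det_permute, abs_mul, Matrix.det_diagonal,
    Finset.abs_prod]
  rcases Int.units_eq_one_or (Equiv.Perm.sign (Fin.revPerm : Equiv.Perm (Fin n))) with h | h <;> simp [h]

lemma aux_fderiv (n : ℕ) (y c : ℝ) (s : Fin n → ℝ) (hs : ∀ j, 0 < s j) :
    HasFDerivAt (fun (s : Fin n → ℝ) j => y + c / s j.rev) (auxDer n fun j => -c / s j ^ 2) s := by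
  rw [hasFDerivAt_pi']
  intro j
  have h : HasDerivAt (fun x : ℝ => y + c / x) (-c / s j.rev ^ 2) (s j.rev) := by
    have := ((hasDerivAt_inv (hs j.rev).ne').const_mul c).const_add y
    convert! this using 1
    ring
  have h2 := h.comp_hasFDerivAt s (ContinuousLinearMap.proj (R := ℝ) (φ := fun _ : Fin n => ℝ) j.rev).hasFDerivAt
  exact h2

lemma aux_image (n : ℕ) (y v : ℝ) (h : y < v) :
    (fun (s : Fin n → ℝ) j => y + (v - y) / s j.rev) ''
      {u : Fin n → ℝ | (∀ j, u j ∈ Set.Ioo (0:ℝ) 1) ∧ StrictMono u}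
      = {u : Fin n → ℝ | (∀ j, v < u j) ∧ StrictMono u} := by
  have hc : 0 < v - y := by linarith
  ext u
  constructor
  · rintro ⟨s, ⟨h1, h2⟩, rfl⟩
    refine ⟨fun j => ?_, fun i j hij => ?_⟩
    · have : v - y < (v - y) / s j.rev := by
        rw [lt_div_iff₀ (h1 _).1]
        nlinarith [(h1 j.rev).2]
      show v < y + (v - y) / s j.rev
      linarith
    · have := div_lt_div_of_pos_left hc (h1 j.rev).1 (h2 (Fin.rev_lt_rev.2 hij))
      show y + (v - y) / s i.rev < y + (v - y) / s j.rev
      linarith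
  · rintro ⟨h1, h2⟩
    have hp : ∀ j, 0 < u j - y := fun j => by linarith [h1 j]
    refine ⟨fun j => (v - y) / (u j.rev - y), ⟨fun j => ⟨div_pos hc (hp _), ?_⟩, fun i j hij => ?_⟩, ?_⟩
    · rw [div_lt_one (hp _)]
      linarith [h1 j.rev]
    · have := h2 (Fin.rev_lt_rev.2 hij)
      exact div_lt_div_of_pos_left hc (hp _) (by linarith)
    · ext j
      have := (hp j).ne'
      simp only [Fin.rev_rev]
      field_simp
      ring

lemma aux_inj (n : ℕ) (y c : ℝ) (hc : 0 < c) :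
    InjOn (fun (s : Fin n → ℝ) (j : Fin n) => y + c / s j.rev)
      {u : Fin n → ℝ | (∀ j, u j ∈ Set.Ioo (0:ℝ) 1) ∧ StrictMono u} := by
  intro s hs t ht hst
  ext j
  have := congrFun hst j.rev
  simp only [Fin.rev_rev, add_right_inj] at this
  have h1 := (hs.1 j).1.ne'
  have h2 := (ht.1 j).1.ne'
  field_simp at this
  exact this.symm

lemma aux_G (κ : ℝ) (hκ : 0 < κ) (n N : ℕ) (hN : 1 ≤ N) (hn : 1 ≤ n) (y v : ℝ) (h : y < v)
    (s : Fin n → ℝ) (hs : (∀ j, s j ∈ Set.Ioo (0:ℝ) 1) ∧ StrictMono s) :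
    (∏ j, |-(v - y) / s j ^ 2|) *
      ((∏ _i : Fin (N - 1), ∏ j : Fin n, ((y + (v - y) / s j.rev) - y) ^ (-4 / κ)) *
          (∏ j : Fin n, ((y + (v - y) / s j.rev) - v) ^ ((2 - κ) / κ)) *
          ∏ p ∈ Finset.univ.filter (fun p : Fin n × Fin n => p.1 < p.2),
            ((y + (v - y) / s p.2.rev) - (y + (v - y) / s p.1.rev)) ^ (8 / κ))
    = (v - y) ^ ((4 / κ) * (n : ℝ) * ((n : ℝ) - (N : ℝ) + 1 / 2)) *
        ((∏ p ∈ Finset.univ.filter (fun p : Fin n × Fin n => p.1 < p.2),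
              (s p.2 - s p.1) ^ (8 / κ)) *
            ∏ j : Fin n,
              (s j) ^ ((4 * (N : ℝ) - 8 * (n : ℝ) + 2 - κ) / κ) * (1 - s j) ^ ((2 - κ) / κ)) := by
  have hc : 0 < v - y := by linarith
  set c := v - y with hcdef
  have hv : v = y + c := by simp [hcdef]
  have h0 : ∀ j, 0 < s j := fun j => (hs.1 j).1
  have hV : ∏ p ∈ Finset.univ.filter (fun p : Fin n × Fin n => p.1 < p.2),
            ((y + c / s p.2.rev) - (y + c / s p.1.rev)) ^ (8 / κ)
      = (∏ j, ((√c / s j) ^ (8 / κ)) ^ (n - 1)) *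
        ∏ p ∈ Finset.univ.filter (fun p : Fin n × Fin n => p.1 < p.2), (s p.2 - s p.1) ^ (8 / κ) := by
    rw [aux_rev_pairs n (fun i j => ((y + c / s i) - (y + c / s j)) ^ (8 / κ)),
      ← aux_prod_pairs n, ← Finset.prod_mul_distrib]
    refine Finset.prod_congr rfl fun p hp => ?_
    have hlt := hs.2 (Finset.mem_filter.1 hp).2
    have a1 := h0 p.1
    have a2 := h0 p.2
    rw [← mul_rpow (by positivity) (by positivity), ← mul_rpow (by positivity) (by linarith)]
    congr 1
    have : √c * √c = c := Real.mul_self_sqrt hc.le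
    rw [div_mul_div_comm, this]
    field_simp
    ring
  have h2 : ∏ j : Fin n, ((y + c / s j.rev) - v) ^ ((2 - κ) / κ)
      = ∏ j, (c * (1 - s j) / s j) ^ ((2 - κ) / κ) := by
    refine Fintype.prod_equiv Fin.revPerm _ _ fun j => ?_
    have := (h0 j.rev).ne'
    simp only [Fin.revPerm_apply]
    congr 1
    rw [hv]
    field_simp
    ring
  have h3 : ∏ _i : Fin (N - 1), ∏ j : Fin n, ((y + c / s j.rev) - y) ^ (-4 / κ)
      = ∏ j, ((c / s j) ^ (-4 / κ)) ^ (N - 1) := by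
    rw [Finset.prod_const, Finset.card_univ, Fintype.card_fin, Finset.prod_pow]
    congr 1
    refine Fintype.prod_equiv Fin.revPerm _ _ fun j => ?_
    simp
  have h4 : ∏ j, |-c / s j ^ 2| = ∏ j, c / s j ^ 2 := by
    refine Finset.prod_congr rfl fun j _ => ?_
    have := h0 j
    rw [neg_div, abs_neg, abs_of_pos (by positivity)]
  have h5 : c ^ ((4 / κ) * (n : ℝ) * ((n : ℝ) - (N : ℝ) + 1 / 2))
      = ∏ _j : Fin n, c ^ ((4 / κ) * ((n : ℝ) - (N : ℝ) + 1 / 2)) := by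
    rw [Finset.prod_const, Finset.card_univ, Fintype.card_fin, ← rpow_natCast, ← rpow_mul hc.le]
    congr 1
    ring
  have h6 := Finset.prod_congr (rfl : (Finset.univ : Finset (Fin n)) = Finset.univ) fun j _ =>
    aux_one κ c (s j) hκ hc (h0 j) (hs.1 j).2 n N hn hN
  simp only [Finset.prod_mul_distrib] at h6 ⊢
  rw [hV, h2, h3, h4, h5]
  linear_combination (∏ p ∈ Finset.univ.filter (fun p : Fin n × Fin n => p.1 < p.2),
              (s p.2 - s p.1) ^ (8 / κ)) * h6

theorem stmt6 (κ : ℝ) (hκ : κ ∈ Set.Ioo (0:ℝ) 4) (N : ℕ) (hN : 2 ≤ N)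
    (y : Fin (N - 1) → ℝ) (hy : Monotone y) (v : ℝ) (hyv : ∀ i, y i < v) :
    IntegrableOn
      (fun u : Fin (N / 2) → ℝ =>
        (∏ i : Fin (N - 1), ∏ j : Fin (N / 2), (u j - y i) ^ (-4 / κ)) *
          (∏ j : Fin (N / 2), (u j - v) ^ ((2 - κ) / κ)) *
          ∏ p ∈ Finset.univ.filter (fun p : Fin (N / 2) × Fin (N / 2) => p.1 < p.2),
            (u p.2 - u p.1) ^ (8 / κ))
      {u : Fin (N / 2) → ℝ | (∀ j, v < u j) ∧ StrictMono u} volume ∧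
    (∫ u in {u : Fin (N / 2) → ℝ | (∀ j, v < u j) ∧ StrictMono u},
        (∏ i : Fin (N - 1), ∏ j : Fin (N / 2), (u j - y i) ^ (-4 / κ)) *
          (∏ j : Fin (N / 2), (u j - v) ^ ((2 - κ) / κ)) *
          ∏ p ∈ Finset.univ.filter (fun p : Fin (N / 2) × Fin (N / 2) => p.1 < p.2),
            (u p.2 - u p.1) ^ (8 / κ))
      ≤ (v - y ⟨N - 2, by omega⟩) ^ ((4 / κ) * ((N / 2 : ℕ) : ℝ) * (((N / 2 : ℕ) : ℝ) - (N : ℝ) + 1 / 2)) *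
        ∫ u in {u : Fin (N / 2) → ℝ | (∀ j, u j ∈ Set.Ioo (0:ℝ) 1) ∧ StrictMono u},
          (∏ p ∈ Finset.univ.filter (fun p : Fin (N / 2) × Fin (N / 2) => p.1 < p.2),
              (u p.2 - u p.1) ^ (8 / κ)) *
            ∏ j : Fin (N / 2),
              (u j) ^ ((4 * (N : ℝ) - 8 * ((N / 2 : ℕ) : ℝ) + 2 - κ) / κ) * (1 - u j) ^ ((2 - κ) / κ) := by
  obtain ⟨hκ0, hκ4⟩ := hκ
  have hymax : ∀ i, y i ≤ y ⟨N - 2, by omega⟩ := fun i => hy (Fin.le_def.2 (by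
    have := i.2
    simp only
    omega))
  have hYv := hyv ⟨N - 2, by omega⟩
  generalize y ⟨N - 2, by omega⟩ = Y at hymax hYv ⊢
  have hn : 1 ≤ N / 2 := by omega
  have h2n : (2:ℝ) * ((N / 2 : ℕ) : ℝ) ≤ N := by
    exact_mod_cast (by omega : 2 * (N / 2) ≤ N)
  generalize N / 2 = n at hn h2n ⊢
  have hH := aux_H n ((4 * (N : ℝ) - 8 * (n : ℝ) + 2) / κ) (2 / κ) (8 / κ)
    (div_pos (by linarith) hκ0) (by positivity) (by positivity)
  have ea : (4 * (N : ℝ) - 8 * (n : ℝ) + 2) / κ - 1 = (4 * (N : ℝ) - 8 * (n : ℝ) + 2 - κ) / κ := by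
    field_simp
  have eb : 2 / κ - 1 = (2 - κ) / κ := by
    field_simp
  rw [ea, eb] at hH
  set A := {u : Fin n → ℝ | (∀ j, v < u j) ∧ StrictMono u} with hA
  set B := {u : Fin n → ℝ | (∀ j, u j ∈ Set.Ioo (0:ℝ) 1) ∧ StrictMono u} with hB
  have hBm : MeasurableSet B := by
    have h : MeasurableSet {u : Fin n → ℝ | ∀ j, u j ∈ Ioo (0:ℝ) 1} := by
      simp only [ofPred_forall]
      exact MeasurableSet.iInter fun i => measurable_pi_apply i measurableSet_Ioo
    exact h.inter (aux_meas n)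
  have hAm : MeasurableSet A := by
    have h : MeasurableSet {u : Fin n → ℝ | ∀ j, u j ∈ Ioi v} := by
      simp only [ofPred_forall]
      exact MeasurableSet.iInter fun i => measurable_pi_apply i measurableSet_Ioi
    exact h.inter (aux_meas n)
  let G : (Fin n → ℝ) → ℝ := fun u =>
    (∏ _i : Fin (N - 1), ∏ j : Fin n, (u j - Y) ^ (-4 / κ)) *
          (∏ j : Fin n, (u j - v) ^ ((2 - κ) / κ)) *
          ∏ p ∈ Finset.univ.filter (fun p : Fin n × Fin n => p.1 < p.2),
            (u p.2 - u p.1) ^ (8 / κ)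
  have himg := aux_image n Y v hYv
  rw [← hA, ← hB] at himg
  have hinj := aux_inj n Y (v - Y) (by linarith)
  rw [← hB] at hinj
  have hder : ∀ s ∈ B, HasFDerivWithinAt (fun (s : Fin n → ℝ) j => Y + (v - Y) / s j.rev)
      (auxDer n fun j => -(v - Y) / s j ^ 2) B s := fun s hs =>
    (aux_fderiv n Y (v - Y) s fun j => (hs.1 j).1).hasFDerivWithinAt
  have hGeq : ∀ s ∈ B, |(auxDer n fun j => -(v - Y) / s j ^ 2).det| •
      G (fun j => Y + (v - Y) / s j.rev) = (v - Y) ^ ((4 / κ) * (n : ℝ) * ((n : ℝ) - (N : ℝ) + 1 / 2)) *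
        ((∏ p ∈ Finset.univ.filter (fun p : Fin n × Fin n => p.1 < p.2),
              (s p.2 - s p.1) ^ (8 / κ)) *
            ∏ j : Fin n,
              (s j) ^ ((4 * (N : ℝ) - 8 * (n : ℝ) + 2 - κ) / κ) * (1 - s j) ^ ((2 - κ) / κ)) := fun s hs => by
    rw [aux_det, smul_eq_mul]
    exact aux_G κ hκ0 n N (by omega) hn Y v hYv s hs
  have hGint : IntegrableOn G A := by
    rw [← himg, integrableOn_image_iff_integrableOn_abs_det_fderiv_smul volume hBm hder hinj]
    exact (integrableOn_congr_fun hGeq hBm).2 (hH.const_mul _)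
  have hGval : ∫ u in A, G u = (v - Y) ^ ((4 / κ) * (n : ℝ) * ((n : ℝ) - (N : ℝ) + 1 / 2)) *
        ∫ s in B, ((∏ p ∈ Finset.univ.filter (fun p : Fin n × Fin n => p.1 < p.2),
              (s p.2 - s p.1) ^ (8 / κ)) *
            ∏ j : Fin n,
              (s j) ^ ((4 * (N : ℝ) - 8 * (n : ℝ) + 2 - κ) / κ) * (1 - s j) ^ ((2 - κ) / κ)) := by
    rw [← himg, integral_image_eq_integral_abs_det_fderiv_smul volume hBm hder hinj,
      setIntegral_congr_fun hBm hGeq, integral_const_mul]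
  have hsub : ∀ u ∈ A, ∀ p ∈ Finset.univ.filter (fun p : Fin n × Fin n => p.1 < p.2),
      0 ≤ u p.2 - u p.1 := fun u hu p hp => by
    have := hu.2 (Finset.mem_filter.1 hp).2
    linarith
  have hle : ∀ u ∈ A, (∏ i : Fin (N - 1), ∏ j : Fin n, (u j - y i) ^ (-4 / κ)) *
          (∏ j : Fin n, (u j - v) ^ ((2 - κ) / κ)) *
          (∏ p ∈ Finset.univ.filter (fun p : Fin n × Fin n => p.1 < p.2),
            (u p.2 - u p.1) ^ (8 / κ)) ≤ G u := fun u hu => by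
    refine mul_le_mul_of_nonneg_right (mul_le_mul_of_nonneg_right ?_ ?_) ?_
    · refine Finset.prod_le_prod (fun i _ => Finset.prod_nonneg fun j _ => rpow_nonneg ?_ _) fun i _ =>
        Finset.prod_le_prod (fun j _ => rpow_nonneg ?_ _) fun j _ =>
          rpow_le_rpow_of_nonpos ?_ ?_ ?_
      · linarith [hyv i, hu.1 j]
      · linarith [hyv i, hu.1 j]
      · linarith [hu.1 j]
      · linarith [hymax i]
      · exact div_nonpos_of_nonpos_of_nonneg (by norm_num) hκ0.le
    · exact Finset.prod_nonneg fun j _ => rpow_nonneg (by linarith [hu.1 j]) _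
    · exact Finset.prod_nonneg fun p hp => rpow_nonneg (hsub u hu p hp) _
  have hnn : ∀ u ∈ A, 0 ≤ (∏ i : Fin (N - 1), ∏ j : Fin n, (u j - y i) ^ (-4 / κ)) *
          (∏ j : Fin n, (u j - v) ^ ((2 - κ) / κ)) *
          (∏ p ∈ Finset.univ.filter (fun p : Fin n × Fin n => p.1 < p.2),
            (u p.2 - u p.1) ^ (8 / κ)) := fun u hu => by
    refine mul_nonneg (mul_nonneg ?_ ?_) ?_
    · exact Finset.prod_nonneg fun i _ => Finset.prod_nonneg fun j _ =>
        rpow_nonneg (by linarith [hyv i, hu.1 j]) _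
    · exact Finset.prod_nonneg fun j _ => rpow_nonneg (by linarith [hu.1 j]) _
    · exact Finset.prod_nonneg fun p hp => rpow_nonneg (hsub u hu p hp) _
  have hF : IntegrableOn (fun u : Fin n → ℝ =>
        (∏ i : Fin (N - 1), ∏ j : Fin n, (u j - y i) ^ (-4 / κ)) *
          (∏ j : Fin n, (u j - v) ^ ((2 - κ) / κ)) *
          ∏ p ∈ Finset.univ.filter (fun p : Fin n × Fin n => p.1 < p.2),
            (u p.2 - u p.1) ^ (8 / κ)) A volume := by
    refine Integrable.mono' hGint ?_ ?_
    · apply Measurable.aestronglyMeasurable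
      fun_prop
    · refine (ae_restrict_iff' hAm).2 (Filter.Eventually.of_forall fun u hu => ?_)
      rw [Real.norm_of_nonneg (hnn u hu)]
      exact hle u hu
  exact ⟨hF, (setIntegral_mono_on hF hGint hAm hle).trans hGval.le⟩
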